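/- Let a, b, c be pairwise coprime positive integers with c² = a² + b² + ab, and let m be a positive integer such that the equilateral triangle with side length m·ab tiles into m²·ab congruent copies of the triangle with side lengths (a, b, c). Then the triangle with side lengths (m·a·c, m·b·(b+2a), m·c·(a+b)) tiles into m²·(b+2a)·(a+b) congruent copies of the triangle with side lengths (a, b, c). -/

import Mathlib

noncomputable section

abbrev Plane := EuclideanSpace ℝ (Fin 2)

/-- The point (x, y) in the Euclidean plane. -/
def pt (x y : ℝ) : Plane := (WithLp.equiv 2 (Fin 2 → ℝ)).symm ![x, y]

/-- `Δ` is a triangle with side lengths `(p, q, r)`: the convex hull of points `P, Q, R`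
with `dist Q R = p`, `dist P R = q`, `dist P Q = r`. -/
def IsTriangle (p q r : ℝ) (Δ : Set Plane) : Prop :=
  ∃ P Q R : Plane, dist Q R = p ∧ dist P R = q ∧ dist P Q = r ∧
    Δ = convexHull ℝ {P, Q, R}

/-- `S` tiles into `N` congruent copies of the `(p, q, r)` triangle: there are isometries
`f 1, …, f N` of the plane and a triangle `Δ` with side lengths `(p, q, r)` such that
`S` is the union of the `f i '' Δ` and their interiors are pairwise disjoint. -/
def TilesInto (S : Set Plane) (N : ℕ) (p q r : ℝ) : Prop :=
  ∃ (f : Fin N → Plane ≃ᵢ Plane) (Δ : Set Plane),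
    IsTriangle p q r Δ ∧
    S = ⋃ i, f i '' Δ ∧
    ∀ i j : Fin N, i ≠ j → interior (f i '' Δ) ∩ interior (f j '' Δ) = ∅

/-- The equilateral triangle with side length `X`. -/
def EquilateralTri (X : ℝ) : Set Plane :=
  convexHull ℝ {pt 0 0, pt X 0, pt (X/2) (X * Real.sqrt 3 / 2)}

/-!
The relation `c² = a² + b² + ab` says that the tile has an angle of `120°` between its sides
`a` and `b`. Let `x`, `y` be the corresponding vectors, so that `|x| = a`, `|y| = b` and
`|y - x| = c`, and let `j b = k a`; in the theorem `j = m a` and `k = m b`. The triangle with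
vertices `P = (j + k) y`, `Q = (j + k) x`, `R = -j y` has the required sides. The cevian from `Q`
to the origin, which lies on `PR`, cuts off the tile scaled by `j + k`. In the remaining triangle
the cevian from `R` to `k x` cuts off the tile scaled by `j`, and what is left is the equilateral
triangle with side `k a`. A tile scaled by `n` splits into `n²` tiles, which gives
`(j + k)² + j² + j k = (k + 2 j) (j + k)` tiles. Triangles with equal sides are congruent, so all
the tilings may use one and the same tile.
-/

section Congruence

open scoped Congruent

variable {V : Type*} [NormedAddCommGroup V] [InnerProductSpace ℝ V]

theorem exists_linearIsometry_of_norm_eq [FiniteDimensional ℝ V] {M : Type*} [AddCommGroup M]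
    [Module ℝ M] {S T : M →ₗ[ℝ] V} (h : ∀ x, ‖S x‖ = ‖T x‖) :
    ∃ L : V →ₗᵢ[ℝ] V, ∀ x, L (S x) = T x := by
  have hker : S.ker ≤ T.ker := fun x hx => by
    rw [LinearMap.mem_ker, ← norm_eq_zero, ← h, norm_eq_zero.2 (LinearMap.mem_ker.1 hx)]
  let L : S.range →ₗ[ℝ] V := S.ker.liftQ T hker ∘ₗ S.quotKerEquivRange.symm
  have hL (x : M) : L ⟨S x, S.mem_range_self x⟩ = T x := by
    simp [L, S.quotKerEquivRange_symm_apply_image]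
  refine ⟨LinearIsometry.extend ⟨L, ?_⟩, fun x => ?_⟩
  · rintro ⟨_, x, rfl⟩
    rw [hL, ← h]
    rfl
  · exact (LinearIsometry.extend_apply _ ⟨S x, S.mem_range_self x⟩).trans (hL x)

theorem norm_linearCombination_eq_of_inner_eq {ι : Type*} {v w : ι → V}
    (h : ∀ i j, inner ℝ (v i) (v j) = inner ℝ (w i) (w j)) (c : ι →₀ ℝ) :
    ‖Finsupp.linearCombination ℝ v c‖ = ‖Finsupp.linearCombination ℝ w c‖ := by
  have hsq : inner ℝ (Finsupp.linearCombination ℝ v c) (Finsupp.linearCombination ℝ v c) =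
      inner ℝ (Finsupp.linearCombination ℝ w c) (Finsupp.linearCombination ℝ w c) := by
    simp only [Finsupp.linearCombination_apply, Finsupp.sum_inner, Finsupp.inner_sum,
      inner_smul_left, inner_smul_right, h]
  rw [norm_eq_sqrt_real_inner, hsq, ← norm_eq_sqrt_real_inner]

theorem exists_affineIsometryEquiv_of_congruent {P : Type*} [MetricSpace P] [NormedAddTorsor V P]
    [FiniteDimensional ℝ V] {ι : Type*} {v w : ι → P} (h : v ≅ w) :
    ∃ g : P ≃ᵃⁱ[ℝ] P, ∀ i, g (v i) = w i := by
  rcases isEmpty_or_nonempty ι with _ | ⟨⟨i₀⟩⟩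
  · exact ⟨.refl ℝ P, isEmptyElim⟩
  have hinner (i j : ι) : inner ℝ (v i -ᵥ v i₀) (v j -ᵥ v i₀) =
      inner ℝ (w i -ᵥ w i₀) (w j -ᵥ w i₀) := by
    simp only [real_inner_eq_norm_mul_self_add_norm_mul_self_sub_norm_sub_mul_self_div_two,
      vsub_sub_vsub_cancel_right, ← dist_eq_norm_vsub, h.dist_eq]
  obtain ⟨L, hL⟩ := exists_linearIsometry_of_norm_eq (norm_linearCombination_eq_of_inner_eq hinner)
  refine ⟨(AffineIsometryEquiv.vaddConst ℝ (v i₀)).symm.trans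
    ((L.toLinearIsometryEquiv rfl).toAffineIsometryEquiv.trans
      (AffineIsometryEquiv.vaddConst ℝ (w i₀))), fun i => ?_⟩
  have hLi : L (v i -ᵥ v i₀) = w i -ᵥ w i₀ := by simpa using hL (Finsupp.single i 1)
  simp [hLi]

end Congruence

section Tiling

open Set Function

variable {X Y ι κ : Type*} [TopologicalSpace X] [TopologicalSpace Y]

/-- A tiling: a covering of a set by pieces with pairwise disjoint interiors. The congruence of the
pieces required in `TilesInto` is not part of this notion. -/
structure IsTiling (T : ι → Set X) (S : Set X) : Prop where
  iUnion_eq : ⋃ i, T i = S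
  pairwise_disjoint : Pairwise (Disjoint on fun i => interior (T i))

namespace IsTiling

theorem subset {T : ι → Set X} {S : Set X} (h : IsTiling T S) (i : ι) : T i ⊆ S :=
  h.iUnion_eq ▸ subset_iUnion T i

theorem of_unique [Unique ι] (S : Set X) : IsTiling (fun _ : ι => S) S :=
  ⟨iUnion_const S, Subsingleton.pairwise⟩

theorem image {T : ι → Set X} {S : Set X} (h : IsTiling T S) (g : X ≃ₜ Y) :
    IsTiling (fun i => g '' T i) (g '' S) where
  iUnion_eq := by rw [← image_iUnion, h.iUnion_eq]
  pairwise_disjoint i j hij := by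
    simp only [onFun, ← g.image_interior]
    exact (disjoint_image_iff g.injective).2 (h.pairwise_disjoint hij)

theorem comp_equiv {T : ι → Set X} {S : Set X} (h : IsTiling T S) (e : κ ≃ ι) :
    IsTiling (T ∘ e) S where
  iUnion_eq := by rw [← h.iUnion_eq]; exact e.surjective.iUnion_comp T
  pairwise_disjoint := h.pairwise_disjoint.comp_of_injective e.injective

theorem sumElim {T : ι → Set X} {T' : κ → Set X} {S S' : Set X} (h : IsTiling T S)
    (h' : IsTiling T' S') (hd : Disjoint (interior S) (interior S')) :
    IsTiling (Sum.elim T T') (S ∪ S') where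
  iUnion_eq := by simp [iUnion_sum, h.iUnion_eq, h'.iUnion_eq]
  pairwise_disjoint := by
    have hd' (i : ι) (j : κ) : Disjoint (interior (T i)) (interior (T' j)) :=
      hd.mono (interior_mono (h.subset i)) (interior_mono (h'.subset j))
    rintro (i | i) (j | j) hij
    · exact h.pairwise_disjoint (ne_of_apply_ne Sum.inl hij)
    · exact hd' i j
    · exact (hd' j i).symm
    · exact h'.pairwise_disjoint (ne_of_apply_ne Sum.inr hij)

end IsTiling

theorem disjoint_interior_of_isOpenMap {α : Type*} [TopologicalSpace α] [LinearOrder α]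
    [OrderTopology α] [DenselyOrdered α] [NoMinOrder α] [NoMaxOrder α] {f : X → α}
    (hf : IsOpenMap f) {k : α} {S T : Set X} (hS : MapsTo f S (Iic k)) (hT : MapsTo f T (Ici k)) :
    Disjoint (interior S) (interior T) := by
  refine Set.disjoint_left.2 fun x hxS hxT => ?_
  have hlt : f x ∈ interior (Iic k) := hf.mapsTo_interior hS hxS
  have hgt : f x ∈ interior (Ici k) := hf.mapsTo_interior hT hxT
  rw [interior_Iic] at hlt
  rw [interior_Ici] at hgt
  exact lt_asymm hlt hgt

end Tiling

section ConvexHull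

open Set

variable {E : Type*} [AddCommGroup E] [Module ℝ E]

theorem segment_union_segment {P R D : E} (hD : D ∈ segment ℝ P R) :
    segment ℝ P D ∪ segment ℝ D R = segment ℝ P R := by
  rw [segment_eq_image_lineMap] at hD
  obtain ⟨t, ht, rfl⟩ := hD
  have himage (r s : ℝ) : segment ℝ (AffineMap.lineMap P R r) (AffineMap.lineMap P R s) =
      AffineMap.lineMap P R '' segment ℝ r s := (image_segment ℝ _ _ _).symm
  have h₁ := himage 0 t
  have h₂ := himage t 1
  have h₃ := himage 0 1
  rw [AffineMap.lineMap_apply_zero] at h₁ h₃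
  rw [AffineMap.lineMap_apply_one] at h₂ h₃
  rw [h₁, h₂, h₃, ← image_union, segment_eq_Icc ht.1, segment_eq_Icc ht.2,
    segment_eq_Icc zero_le_one, Icc_union_Icc_eq_Icc ht.1 ht.2]

theorem smul_mem_segment {r s t : ℝ} (h : s ∈ uIcc r t) (v : E) :
    s • v ∈ segment ℝ (r • v) (t • v) := by
  rw [← segment_eq_uIcc] at h
  exact image_segment ℝ (LinearMap.toSpanSingleton ℝ E v).toAffineMap r t ▸ mem_image_of_mem _ h

theorem convexHull_union_of_mem_segment {P Q R D : E} (hD : D ∈ segment ℝ P R) :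
    convexHull ℝ {P, Q, D} ∪ convexHull ℝ {Q, R, D} = convexHull ℝ {P, Q, R} := by
  rw [insert_comm P Q, insert_comm P Q, pair_comm R D,
    convexHull_insert (insert_nonempty P {D}), convexHull_insert (insert_nonempty D {R}),
    convexHull_insert (insert_nonempty P {R}), ← convexJoin_union_right]
  simp only [convexHull_pair, segment_union_segment hD]

theorem mapsTo_convexHull_triple (l : E →ₗ[ℝ] ℝ) {s : Set ℝ} (hs : Convex ℝ s) {P Q R : E}
    (hP : l P ∈ s) (hQ : l Q ∈ s) (hR : l R ∈ s) : MapsTo l (convexHull ℝ {P, Q, R}) s :=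
  mapsTo_iff_subset_preimage.2 <| convexHull_min
    (insert_subset hP (insert_subset hQ (singleton_subset_iff.2 hR))) (hs.linear_preimage l)

theorem exists_linearMap_ne_zero_apply_eq_zero [FiniteDimensional ℝ E]
    (hE : 1 < Module.finrank ℝ E) (v : E) : ∃ l : E →ₗ[ℝ] ℝ, l ≠ 0 ∧ l v = 0 := by
  have hv : Submodule.span ℝ {v} < ⊤ := Submodule.lt_top_of_finrank_lt_finrank
    ((finrank_span_le_card {v}).trans_lt (by simpa using hE))
  obtain ⟨l, hl, hle⟩ := Submodule.exists_le_ker_of_lt_top _ hv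
  exact ⟨l, hl, hle (Submodule.mem_span_singleton_self v)⟩

end ConvexHull

section Triangle

open Set
open scoped Congruent

theorem isTriangle_convexHull_smul (x y : Plane) {n : ℝ} (hn : 0 ≤ n) :
    IsTriangle (n * ‖x‖) (n * ‖y‖) (n * ‖y - x‖) (convexHull ℝ {n • y, n • x, 0}) :=
  ⟨n • y, n • x, 0, by rw [dist_zero_right, norm_smul, Real.norm_of_nonneg hn],
    by rw [dist_zero_right, norm_smul, Real.norm_of_nonneg hn],
    by rw [dist_smul₀, Real.norm_of_nonneg hn, dist_eq_norm], rfl⟩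

theorem image_convexHull_triple (g : Plane ≃ᵃⁱ[ℝ] Plane) (P Q R : Plane) :
    g '' convexHull ℝ {P, Q, R} = convexHull ℝ {g P, g Q, g R} := by
  have himage := g.toAffineEquiv.toAffineMap.image_convexHull {P, Q, R}
  rwa [image_insert_eq, image_pair] at himage

theorem IsTriangle.image {p q r : ℝ} {Δ : Set Plane} (h : IsTriangle p q r Δ)
    (g : Plane ≃ᵃⁱ[ℝ] Plane) : IsTriangle p q r (g '' Δ) := by
  obtain ⟨P, Q, R, hQR, hPR, hPQ, rfl⟩ := h
  exact ⟨g P, g Q, g R, by rwa [g.dist_map], by rwa [g.dist_map], by rwa [g.dist_map],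
    image_convexHull_triple g P Q R⟩

theorem IsTriangle.exists_image_eq {p q r : ℝ} {Δ Δ' : Set Plane} (h : IsTriangle p q r Δ)
    (h' : IsTriangle p q r Δ') : ∃ g : Plane ≃ᵃⁱ[ℝ] Plane, g '' Δ = Δ' := by
  obtain ⟨P, Q, R, hQR, hPR, hPQ, rfl⟩ := h
  obtain ⟨P', Q', R', hQR', hPR', hPQ', rfl⟩ := h'
  have hcongr : ![P, Q, R] ≅ ![P', Q', R'] :=
    EuclideanGeometry.side_side_side (hPQ.trans hPQ'.symm) (hQR.trans hQR'.symm)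
      (by rw [dist_comm, hPR, dist_comm, hPR'])
  obtain ⟨g, hg⟩ := exists_affineIsometryEquiv_of_congruent hcongr
  have hP : g P = P' := hg 0
  have hQ : g Q = Q' := hg 1
  have hR : g R = R' := hg 2
  exact ⟨g, by rw [image_convexHull_triple, hP, hQ, hR]⟩

theorem IsTriangle.exists_norm_eq {p q r : ℝ} {Δ : Set Plane} (h : IsTriangle p q r Δ) :
    ∃ x y : Plane, ‖x‖ = p ∧ ‖y‖ = q ∧ ‖y - x‖ = r := by
  obtain ⟨P, Q, R, rfl, rfl, rfl, -⟩ := h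
  exact ⟨Q - R, P - R, (dist_eq_norm _ _).symm, (dist_eq_norm _ _).symm,
    by rw [sub_sub_sub_cancel_right, dist_eq_norm]⟩

theorem isTriangle_equilateralTri {X : ℝ} (hX : 0 ≤ X) : IsTriangle X X X (EquilateralTri X) := by
  have h3 : Real.sqrt 3 ^ 2 = 3 := Real.sq_sqrt (by norm_num)
  have hdist {u v u' v' : ℝ} (h : (u - u') ^ 2 + (v - v') ^ 2 = X ^ 2) :
      dist (pt u v) (pt u' v') = X := by
    rw [EuclideanSpace.dist_eq, Fin.sum_univ_two, Real.dist_eq, Real.dist_eq, sq_abs, sq_abs]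
    exact (congrArg Real.sqrt h).trans (Real.sqrt_sq hX)
  exact ⟨_, _, _, hdist (by linear_combination X ^ 2 / 4 * h3),
    hdist (by linear_combination X ^ 2 / 4 * h3), hdist (by ring), rfl⟩

theorem tilesInto_iff {S : Set Plane} {N : ℕ} {p q r : ℝ} :
    TilesInto S N p q r ↔ ∃ (f : Fin N → Plane ≃ᵢ Plane) (Δ : Set Plane),
      IsTriangle p q r Δ ∧ IsTiling (fun i => f i '' Δ) S := by
  refine exists₂_congr fun f Δ => and_congr_right fun _ =>
    ⟨fun h => ⟨h.1.symm, ?_⟩, fun h => ⟨h.1.symm, ?_⟩⟩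
  · exact fun i j hij => disjoint_iff_inter_eq_empty.2 (h.2 i j hij)
  · exact fun i j hij => disjoint_iff_inter_eq_empty.1 (h.2 hij)

namespace TilesInto

variable {p q r : ℝ} {S T Δ : Set Plane} {M N : ℕ}

theorem of_isTriangle (h : IsTriangle p q r Δ) : TilesInto Δ 1 p q r :=
  tilesInto_iff.2 ⟨fun _ => .refl Plane, Δ, h, by
    convert IsTiling.of_unique (ι := Fin 1) Δ
    exact image_id Δ⟩

theorem image (h : TilesInto S N p q r) (g : Plane ≃ᵢ Plane) : TilesInto (g '' S) N p q r := by
  obtain ⟨f, Δ, hΔ, hf⟩ := tilesInto_iff.1 h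
  refine tilesInto_iff.2 ⟨fun i => (f i).trans g, Δ, hΔ, ?_⟩
  simpa only [image_image] using! hf.image g.toHomeomorph

theorem congr {u v w : ℝ} (h : TilesInto S N p q r) (hS : IsTriangle u v w S)
    (hT : IsTriangle u v w T) : TilesInto T N p q r := by
  obtain ⟨g, rfl⟩ := hS.exists_image_eq hT
  exact h.image g.toIsometryEquiv

theorem exists_isTiling (h : TilesInto S N p q r) (hΔ : IsTriangle p q r Δ) :
    ∃ f : Fin N → Plane ≃ᵢ Plane, IsTiling (fun i => f i '' Δ) S := by
  obtain ⟨f, Δ', hΔ', hf⟩ := tilesInto_iff.1 h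
  obtain ⟨g, rfl⟩ := hΔ.exists_image_eq hΔ'
  exact ⟨fun i => g.toIsometryEquiv.trans (f i), by simpa only [image_image] using! hf⟩

theorem union (hS : TilesInto S M p q r) (hT : TilesInto T N p q r)
    (hd : Disjoint (interior S) (interior T)) : TilesInto (S ∪ T) (M + N) p q r := by
  obtain ⟨f, Δ, hΔ, hf⟩ := tilesInto_iff.1 hS
  obtain ⟨g, hg⟩ := hT.exists_isTiling hΔ
  refine tilesInto_iff.2 ⟨Sum.elim f g ∘ finSumFinEquiv.symm, Δ, hΔ, ?_⟩
  convert (hf.sumElim hg hd).comp_equiv finSumFinEquiv.symm using 1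
  ext1 i
  rcases h : finSumFinEquiv.symm i <;> simp [h]

theorem union_of_separated {l : Plane →ₗ[ℝ] ℝ} (hl : l ≠ 0) {k : ℝ}
    (hS : TilesInto S M p q r) (hT : TilesInto T N p q r) (hSl : MapsTo l S (Iic k))
    (hTl : MapsTo l T (Ici k)) : TilesInto (S ∪ T) (M + N) p q r :=
  hS.union hT <| disjoint_interior_of_isOpenMap
    (l.isOpenMap_of_finiteDimensional (LinearMap.surjective hl)) hSl hTl

theorem of_cut {l : Plane →ₗ[ℝ] ℝ} (hl : l ≠ 0) (k : ℝ)
    (hle : TilesInto {x ∈ S | l x ≤ k} M p q r) (hge : TilesInto {x ∈ S | k ≤ l x} N p q r) :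
    TilesInto S (M + N) p q r := by
  have hS : {x ∈ S | l x ≤ k} ∪ {x ∈ S | k ≤ l x} = S := by
    rw [← sep_or]
    exact sep_eq_self_iff_mem_true.2 fun x _ => le_total (l x) k
  exact hS ▸ union_of_separated hl hle hge (fun _ hx => hx.2) (fun _ hx => hx.2)

theorem of_cevian {P Q R D : Plane} (hD : D ∈ segment ℝ P R)
    (hP : TilesInto (convexHull ℝ {P, Q, D}) M p q r)
    (hR : TilesInto (convexHull ℝ {Q, R, D}) N p q r) :
    TilesInto (convexHull ℝ {P, Q, R}) (M + N) p q r := by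
  obtain ⟨l, hl, hQD⟩ := exists_linearMap_ne_zero_apply_eq_zero (by simp) (Q - D)
  rw [map_sub, sub_eq_zero] at hQD
  have hmem : l D ∈ uIcc (l P) (l R) := by
    rw [← segment_eq_uIcc]
    exact image_segment ℝ l.toAffineMap P R ▸ mem_image_of_mem l hD
  rw [← convexHull_union_of_mem_segment hD]
  rcases mem_uIcc.1 hmem with ⟨hPD, hDR⟩ | ⟨hRD, hDP⟩
  · exact union_of_separated hl hP hR
      (mapsTo_convexHull_triple l (convex_Iic (l D)) hPD hQD.le self_mem_Iic)
      (mapsTo_convexHull_triple l (convex_Ici (l D)) hQD.ge hDR self_mem_Ici)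
  · rw [union_comm, add_comm]
    exact union_of_separated hl hR hP
      (mapsTo_convexHull_triple l (convex_Iic (l D)) hQD.le hRD self_mem_Iic)
      (mapsTo_convexHull_triple l (convex_Ici (l D)) hDP hQD.ge self_mem_Ici)

end TilesInto

end Triangle

section SquareTiling

open Set Module

theorem coord_ne_zero {ι K V : Type*} [Ring K] [Nontrivial K] [AddCommGroup V] [Module K V]
    (B : Basis ι K V) (i : ι) : B.coord i ≠ 0 :=
  fun h => by simpa using LinearMap.congr_fun h (B i)

variable {E : Type*} [AddCommGroup E] [Module ℝ E]

theorem mem_convexHull_smul_basis_iff (B : Basis (Fin 2) ℝ E) {n : ℝ} (hn : 0 < n) {x : E} :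
    x ∈ convexHull ℝ {n • B 1, n • B 0, 0} ↔
      0 ≤ B.coord 0 x ∧ 0 ≤ B.coord 1 x ∧ B.coord 0 x + B.coord 1 x ≤ n := by
  constructor
  · intro hx
    have h₀ := mapsTo_convexHull_triple (B.coord 0) (convex_Ici 0) (by simp) (by simp [hn.le])
      (by simp) hx
    have h₁ := mapsTo_convexHull_triple (B.coord 1) (convex_Ici 0) (by simp [hn.le]) (by simp)
      (by simp) hx
    have h₂ := mapsTo_convexHull_triple (B.coord 0 + B.coord 1) (convex_Iic n) (by simp) (by simp)
      (by simp [hn.le]) hx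
    exact ⟨h₀, h₁, h₂⟩
  · rintro ⟨h₀, h₁, h₂⟩
    have hx : ∑ i, ![B.coord 1 x / n, B.coord 0 x / n, 1 - (B.coord 0 x + B.coord 1 x) / n] i •
        ![n • B 1, n • B 0, 0] i = x := by
      have hrepr : B.coord 0 x • B 0 + B.coord 1 x • B 1 = x := by
        rw [← Fin.sum_univ_two fun i => B.coord i x • B i]
        exact B.sum_repr x
      simpa [Fin.sum_univ_three, smul_smul, div_mul_cancel₀ _ hn.ne', add_comm] using hrepr
    rw [← hx]
    refine (convex_convexHull ℝ _).sum_mem (fun i _ => ?_) ?_ fun i _ => subset_convexHull ℝ _ ?_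
    · fin_cases i
      exacts [div_nonneg h₁ hn.le, div_nonneg h₀ hn.le, sub_nonneg.2 ((div_le_one hn).2 h₂)]
    · rw [Fin.sum_univ_three]
      change B.coord 1 x / n + B.coord 0 x / n + (1 - (B.coord 0 x + B.coord 1 x) / n) = 1
      ring
    · fin_cases i <;> simp

/-- The triangle with corner `s • B 0 + t • B 1` and legs `n • B 0`, `n • B 1`, given by
inequalities so that cutting it along the lines of a lattice becomes linear arithmetic. -/
def cornerTriangle (B : Basis (Fin 2) ℝ E) (s t n : ℝ) : Set E :=
  {x | s ≤ B.coord 0 x ∧ t ≤ B.coord 1 x ∧ B.coord 0 x + B.coord 1 x ≤ s + t + n}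

theorem cornerTriangle_zero_zero (B : Basis (Fin 2) ℝ E) {n : ℝ} (hn : 0 < n) :
    cornerTriangle B 0 0 n = convexHull ℝ {n • B 1, n • B 0, 0} := by
  ext x
  simp only [cornerTriangle, mem_convexHull_smul_basis_iff B hn, mem_ofPred_eq, zero_add]

variable {B : Basis (Fin 2) ℝ Plane} {p q r : ℝ}

theorem isTriangle_cornerTriangle (h : IsTriangle p q r (cornerTriangle B 0 0 1)) (s t : ℝ) :
    IsTriangle p q r (cornerTriangle B s t 1) := by
  have h₀ : B.coord 0 (s • B 0 + t • B 1) = s := by simp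
  have h₁ : B.coord 1 (s • B 0 + t • B 1) = t := by simp
  convert h.image (AffineIsometryEquiv.vaddConst ℝ (s • B 0 + t • B 1)) using 1
  simp only [AffineIsometryEquiv.coe_vaddConst, vadd_eq_add, image_add_right]
  ext x
  simp only [cornerTriangle, mem_preimage, mem_ofPred_eq, map_add, map_neg, h₀, h₁]
  grind

theorem isTriangle_reflected_cornerTriangle (h : IsTriangle p q r (cornerTriangle B 0 0 1))
    (s t : ℝ) :
    IsTriangle p q r
      {x | B.coord 0 x ≤ s ∧ B.coord 1 x ≤ t ∧ s + t - 1 ≤ B.coord 0 x + B.coord 1 x} := by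
  have h₀ : B.coord 0 (s • B 0 + t • B 1) = s := by simp
  have h₁ : B.coord 1 (s • B 0 + t • B 1) = t := by simp
  convert h.image (AffineIsometryEquiv.constVSub ℝ (s • B 0 + t • B 1)) using 1
  refine Eq.trans ?_ (congrFun
    (image_eq_preimage_of_inverse (sub_sub_cancel _) (sub_sub_cancel _)) _).symm
  ext x
  simp only [cornerTriangle, mem_preimage, mem_ofPred_eq, map_sub, h₀, h₁]
  grind

theorem tilesInto_parallelogram (h : IsTriangle p q r (cornerTriangle B 0 0 1)) (s t : ℝ) :
    TilesInto {x | B.coord 0 x ∈ Icc s (s + 1) ∧ B.coord 1 x ∈ Icc t (t + 1)} 2 p q r := by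
  have hl : B.coord 0 + B.coord 1 ≠ 0 := fun h => by simpa using LinearMap.congr_fun h (B 0)
  refine TilesInto.of_cut (M := 1) (N := 1) hl (s + t + 1) ?_ ?_
  · convert TilesInto.of_isTriangle (isTriangle_cornerTriangle h s t) using 1
    ext x
    simp only [cornerTriangle, mem_ofPred_eq, mem_Icc, LinearMap.add_apply]
    grind
  · convert TilesInto.of_isTriangle (isTriangle_reflected_cornerTriangle h (s + 1) (t + 1)) using 1
    ext x
    simp only [mem_ofPred_eq, mem_Icc, LinearMap.add_apply]
    grind

theorem tilesInto_strip (h : IsTriangle p q r (cornerTriangle B 0 0 1)) (n : ℕ) (s t : ℝ) :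
    TilesInto {x ∈ cornerTriangle B s t (n + 1) | B.coord 0 x ≤ s + 1} (2 * n + 1) p q r := by
  induction n generalizing t with
  | zero =>
    convert TilesInto.of_isTriangle (isTriangle_cornerTriangle h s t) using 1
    ext x
    simp only [cornerTriangle, mem_ofPred_eq]
    grind
  | succ n ih =>
    rw [show 2 * (n + 1) + 1 = 2 + (2 * n + 1) by ring]
    refine TilesInto.of_cut (coord_ne_zero B 1) (t + 1) ?_ ?_
    · convert tilesInto_parallelogram h s t using 1
      ext x
      simp only [cornerTriangle, mem_ofPred_eq, mem_Icc]
      grind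
    · convert ih (t + 1) using 1
      ext x
      simp only [cornerTriangle, mem_ofPred_eq]
      grind

theorem tilesInto_cornerTriangle (h : IsTriangle p q r (cornerTriangle B 0 0 1)) (n : ℕ)
    (s t : ℝ) : TilesInto (cornerTriangle B s t (n + 1)) ((n + 1) ^ 2) p q r := by
  induction n generalizing s with
  | zero => simpa using TilesInto.of_isTriangle (isTriangle_cornerTriangle h s t)
  | succ n ih =>
    rw [show (n + 1 + 1) ^ 2 = (2 * (n + 1) + 1) + (n + 1) ^ 2 by ring]
    refine TilesInto.of_cut (coord_ne_zero B 0) (s + 1) (tilesInto_strip h (n + 1) s t) ?_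
    convert ih (s + 1) using 1
    ext x
    simp only [cornerTriangle, mem_ofPred_eq]
    grind

theorem IsTriangle.tilesInto_sq {x y : Plane} {n : ℕ} {Δ : Set Plane}
    (hΔ : IsTriangle (n * ‖x‖) (n * ‖y‖) (n * ‖y - x‖) Δ) (hxy : LinearIndependent ℝ ![x, y])
    (hn : n ≠ 0) : TilesInto Δ (n ^ 2) ‖x‖ ‖y‖ ‖y - x‖ := by
  have hn' : (0 : ℝ) < n := by positivity
  let B : Basis (Fin 2) ℝ Plane := basisOfLinearIndependentOfCardEqFinrank hxy (by simp)
  have hB₀ : B 0 = x := by simp [B]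
  have hB₁ : B 1 = y := by simp [B]
  have htri {k : ℝ} (hk : 0 < k) :
      IsTriangle (k * ‖x‖) (k * ‖y‖) (k * ‖y - x‖) (cornerTriangle B 0 0 k) := by
    rw [cornerTriangle_zero_zero B hk, hB₀, hB₁]
    exact isTriangle_convexHull_smul x y hk.le
  refine TilesInto.congr ?_ (htri hn') hΔ
  obtain ⟨n, rfl⟩ := Nat.exists_eq_succ_of_ne_zero hn
  simpa using tilesInto_cornerTriangle (by simpa using htri one_pos) n 0 0

end SquareTiling

section ObtuseAngle

variable {V : Type*} [NormedAddCommGroup V] [InnerProductSpace ℝ V] {x y : V}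

-- By the law of cosines, the hypothesis says that `x` and `y` make an angle of `120°`.
theorem norm_smul_add_smul_sq_of_norm_sub_sq
    (h : ‖y - x‖ ^ 2 = ‖x‖ ^ 2 + ‖y‖ ^ 2 + ‖x‖ * ‖y‖) (s t : ℝ) :
    ‖s • x + t • y‖ ^ 2 = (s * ‖x‖) ^ 2 + (t * ‖y‖) ^ 2 - s * ‖x‖ * (t * ‖y‖) := by
  rw [norm_sub_sq_real, real_inner_comm] at h
  rw [norm_add_sq_real, norm_smul, norm_smul, mul_pow, mul_pow, Real.norm_eq_abs, Real.norm_eq_abs,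
    sq_abs, sq_abs, real_inner_smul_left, real_inner_smul_right]
  linear_combination (-s * t) * h

theorem linearIndependent_pair_of_norm_sub_sq (hx : x ≠ 0) (hy : y ≠ 0)
    (h : ‖y - x‖ ^ 2 = ‖x‖ ^ 2 + ‖y‖ ^ 2 + ‖x‖ * ‖y‖) : LinearIndependent ℝ ![x, y] := by
  refine LinearIndependent.pair_iff.2 fun s t hst => ?_
  have hsq := norm_smul_add_smul_sq_of_norm_sub_sq h s t
  rw [hst, norm_zero] at hsq
  have hs : s * ‖x‖ = 0 := by nlinarith [sq_nonneg (s * ‖x‖ - 2 * (t * ‖y‖))]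
  have ht : t * ‖y‖ = 0 := by nlinarith [sq_nonneg (t * ‖y‖ - 2 * (s * ‖x‖))]
  exact ⟨(mul_eq_zero_iff_right (norm_ne_zero_iff.2 hx)).1 hs,
    (mul_eq_zero_iff_right (norm_ne_zero_iff.2 hy)).1 ht⟩

theorem dist_eq_of_sub_eq_smul_add_smul (h : ‖y - x‖ ^ 2 = ‖x‖ ^ 2 + ‖y‖ ^ 2 + ‖x‖ * ‖y‖)
    {P Q : V} {s t d : ℝ} (hPQ : P - Q = s • x + t • y) (hd : 0 ≤ d)
    (hst : (s * ‖x‖) ^ 2 + (t * ‖y‖) ^ 2 - s * ‖x‖ * (t * ‖y‖) = d ^ 2) : dist P Q = d := by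
  rw [dist_eq_norm, hPQ, ← sq_eq_sq₀ (norm_nonneg _) hd,
    norm_smul_add_smul_sq_of_norm_sub_sq h, hst]

end ObtuseAngle

section Cevians

open Set

variable {x y : Plane} {j k : ℕ}

theorem TilesInto.convexHull_zero_of_equilateralTri (hx : x ≠ 0) (hy : y ≠ 0)
    (h : ‖y - x‖ ^ 2 = ‖x‖ ^ 2 + ‖y‖ ^ 2 + ‖x‖ * ‖y‖) (hj : j ≠ 0) (hjk : j * ‖y‖ = k * ‖x‖)
    (heq : TilesInto (EquilateralTri (k * ‖x‖)) (j * k) ‖x‖ ‖y‖ ‖y - x‖) :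
    TilesInto (convexHull ℝ {0, (-j : ℝ) • y, (j + k : ℝ) • x}) (j * k + j ^ 2)
      ‖x‖ ‖y‖ ‖y - x‖ := by
  have hD : (k : ℝ) • x ∈ segment ℝ 0 ((j + k : ℝ) • x) := by
    simpa only [zero_smul] using
      smul_mem_segment (mem_uIcc_of_le k.cast_nonneg (by simp : (k : ℝ) ≤ j + k)) x
  have hka : 0 ≤ k * ‖x‖ := by positivity
  have hequilateral : IsTriangle (k * ‖x‖) (k * ‖x‖) (k * ‖x‖)
      (convexHull ℝ {0, (-j : ℝ) • y, (k : ℝ) • x}) := by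
    refine ⟨_, _, _, dist_eq_of_sub_eq_smul_add_smul (s := -k) (t := -j) h (by module) hka ?_,
      dist_eq_of_sub_eq_smul_add_smul (s := -k) (t := 0) h (by module) hka (by ring),
      dist_eq_of_sub_eq_smul_add_smul (s := 0) (t := j) h (by module) hka ?_, rfl⟩
    · linear_combination (j * ‖y‖) * hjk
    · linear_combination (j * ‖y‖ + k * ‖x‖) * hjk
  have hscaled : IsTriangle (j * ‖x‖) (j * ‖y‖) (j * ‖y - x‖)
      (convexHull ℝ {(-j : ℝ) • y, (j + k : ℝ) • x, (k : ℝ) • x}) := by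
    refine ⟨_, _, _,
      dist_eq_of_sub_eq_smul_add_smul (s := j) (t := 0) h (by module) (by positivity) (by ring),
      dist_eq_of_sub_eq_smul_add_smul (s := -k) (t := -j) h (by module) (by positivity) ?_,
      dist_eq_of_sub_eq_smul_add_smul (s := -(j + k)) (t := -j) h (by module) (by positivity) ?_,
      rfl⟩
    · linear_combination (-k * ‖x‖) * hjk
    · linear_combination (-j ^ 2 : ℝ) * h - (2 * j + k) * ‖x‖ * hjk
  exact .of_cevian hD (heq.congr (isTriangle_equilateralTri hka) hequilateral)
    (hscaled.tilesInto_sq (linearIndependent_pair_of_norm_sub_sq hx hy h) hj)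

theorem TilesInto.convexHull_of_equilateralTri (hx : x ≠ 0) (hy : y ≠ 0)
    (h : ‖y - x‖ ^ 2 = ‖x‖ ^ 2 + ‖y‖ ^ 2 + ‖x‖ * ‖y‖) (hj : j ≠ 0) (hjk : j * ‖y‖ = k * ‖x‖)
    (heq : TilesInto (EquilateralTri (k * ‖x‖)) (j * k) ‖x‖ ‖y‖ ‖y - x‖) :
    TilesInto (convexHull ℝ {(j + k : ℝ) • y, (j + k : ℝ) • x, (-j : ℝ) • y})
      ((j + k) ^ 2 + (j * k + j ^ 2)) ‖x‖ ‖y‖ ‖y - x‖ := by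
  have hD : 0 ∈ segment ℝ ((j + k : ℝ) • y) ((-j : ℝ) • y) := by
    simpa only [zero_smul] using
      smul_mem_segment (mem_uIcc_of_ge (by simp) (by positivity : (0 : ℝ) ≤ j + k)) y
  have hxy := linearIndependent_pair_of_norm_sub_sq hx hy h
  refine .of_cevian hD ?_ ?_
  · rw [← Nat.cast_add]
    exact (isTriangle_convexHull_smul x y (Nat.cast_nonneg _)).tilesInto_sq hxy (by omega)
  · rw [insert_comm, pair_comm, insert_comm]
    exact TilesInto.convexHull_zero_of_equilateralTri hx hy h hj hjk heq

theorem isTriangle_convexHull_smul_smul_neg_smul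
    (h : ‖y - x‖ ^ 2 = ‖x‖ ^ 2 + ‖y‖ ^ 2 + ‖x‖ * ‖y‖) (hjk : j * ‖y‖ = k * ‖x‖) :
    IsTriangle (j * ‖y - x‖) (k * (‖y‖ + 2 * ‖x‖)) ((j + k) * ‖y - x‖)
      (convexHull ℝ {(j + k : ℝ) • y, (j + k : ℝ) • x, (-j : ℝ) • y}) := by
  refine ⟨_, _, _, dist_eq_of_sub_eq_smul_add_smul (s := j + k) (t := j) h (by module)
      (by positivity) ?_,
    dist_eq_of_sub_eq_smul_add_smul (s := 0) (t := 2 * j + k) h (by module) (by positivity) ?_,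
    dist_eq_of_sub_eq_smul_add_smul (s := -(j + k)) (t := j + k) h (by module)
      (by positivity) ?_, rfl⟩
  · linear_combination (-j ^ 2 : ℝ) * h - (2 * j + k) * ‖x‖ * hjk
  · linear_combination 2 * ((2 * j + k) * ‖y‖ + k * (‖y‖ + 2 * ‖x‖)) * hjk
  · linear_combination (-(j + k) ^ 2 : ℝ) * h

end Cevians

theorem stmt17_general {a b c : ℝ} (ha : 0 < a) (hb : 0 < b) (h : c ^ 2 = a ^ 2 + b ^ 2 + a * b)
    {j k : ℕ} (hj : j ≠ 0) (hjk : j * b = k * a)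
    (heq : TilesInto (EquilateralTri (k * a)) (j * k) a b c) (Δ : Set Plane)
    (hΔ : IsTriangle (j * c) (k * (b + 2 * a)) ((j + k) * c) Δ) :
    TilesInto Δ ((k + 2 * j) * (j + k)) a b c := by
  have ⟨_, _, htile, _⟩ := heq
  obtain ⟨x, y, rfl, rfl, rfl⟩ := htile.exists_norm_eq
  rw [show (k + 2 * j) * (j + k) = (j + k) ^ 2 + (j * k + j ^ 2) by ring]
  have hT := TilesInto.convexHull_of_equilateralTri (norm_pos_iff.1 ha) (norm_pos_iff.1 hb) h hj
    hjk heq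
  exact hT.congr (isTriangle_convexHull_smul_smul_neg_smul h hjk) hΔ

theorem stmt17 (a b c : ℕ) (ha : 0 < a) (hb : 0 < b) (hc : 0 < c)
    (hab : Nat.Coprime a b) (hac : Nat.Coprime a c) (hbc : Nat.Coprime b c)
    (h : c ^ 2 = a ^ 2 + b ^ 2 + a * b) (m : ℕ) (hm : 0 < m)
    (heq : TilesInto (EquilateralTri ((m : ℝ) * a * b)) (m ^ 2 * a * b) a b c) :
    ∀ Δ : Set Plane,
      IsTriangle ((m : ℝ) * a * c) ((m : ℝ) * b * (b + 2 * a)) ((m : ℝ) * c * (a + b)) Δ →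
      TilesInto Δ (m ^ 2 * (b + 2 * a) * (a + b)) a b c := by
  intro Δ hΔ
  convert stmt17_general (c := c) (j := m * a) (k := m * b) (Nat.cast_pos.2 ha)
    (Nat.cast_pos.2 hb) (by exact_mod_cast h) (by positivity) (by push_cast; ring) ?_ Δ ?_ using 1
  · ring
  · convert heq using 1 <;> push_cast <;> ring_nf
  · convert hΔ using 1 <;> push_cast <;> ring
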